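/- Let n ≥ 1, ε ∈ (0,1], τ ∈ [0,1), and let G = (V,E) be a finite simple graph with |E| ≥ 16n/((1−τ)²ε⁴). Let P be a probability vector on [n] with ∑_i |P i − 1/n| ≥ ε that additionally satisfies |E|·(μ(P) − μ(P)²) ≥ c(G)·(γ(P) − μ(P)²), and let T = |E|·(1+τε²)/n. Then the probability that the collision count Z satisfies Z < T is at most 1/4. -/

import Mathlib

/-!
Write `μ = ∑ P i ^ 2` and `γ = ∑ P i ^ 3`. As `E[Z] = |E| μ`, Chebyshev's inequality reduces the
claim to `4 Var Z ≤ (E[Z] - T)²`.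

Collisions along disjoint edges are uncorrelated, whereas those along two edges with exactly one
common endpoint have covariance `γ - μ²`; there are `c(G)` ordered pairs of the latter kind, so
`Var Z = |E| (μ - μ²) + c(G) (γ - μ²)`. In the type-1 case the first term dominates, hence
`Var Z ≤ 2 |E| μ`. By Cauchy–Schwarz, `δ = n μ - 1` is at least `ε²`, so that
`E[Z] - T ≥ |E| (1 - τ) δ / n`, and the lower bound on `|E|` makes the square of this at least
`8 |E| μ`.
-/

open Finset

open Classical in
/-- Probability of the event `A` under the product distribution on `Ω = V → Fin n`,
where the coordinates are independent and each has law the probability vector `P`. -/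
noncomputable def pr {V : Type*} [Fintype V] [DecidableEq V] {n : ℕ}
    (P : Fin n → ℝ) (A : (V → Fin n) → Prop) : ℝ :=
  ∑ ω : V → Fin n, if A ω then ∏ v, P (ω v) else 0

/-- Expectation of `f` under the product distribution. -/
noncomputable def ex {V : Type*} [Fintype V] [DecidableEq V] {n : ℕ}
    (P : Fin n → ℝ) (f : (V → Fin n) → ℝ) : ℝ :=
  ∑ ω : V → Fin n, (∏ v, P (ω v)) * f ω

/-- Variance of `f` under the product distribution. -/
noncomputable def var {V : Type*} [Fintype V] [DecidableEq V] {n : ℕ}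
    (P : Fin n → ℝ) (f : (V → Fin n) → ℝ) : ℝ :=
  ex P (fun ω => (f ω - ex P f) ^ 2)

/-- The collision count `Z(ω) = ∑_{{u,v} ∈ E} 1[ω u = ω v]`. -/
noncomputable def collisions {V : Type*} [Fintype V] [DecidableEq V] {n : ℕ}
    (G : SimpleGraph V) [DecidableRel G.Adj] (ω : V → Fin n) : ℝ :=
  ∑ e ∈ G.edgeFinset,
    Sym2.lift ⟨fun u v => if ω u = ω v then (1 : ℝ) else 0,
      fun u v => by by_cases h : ω u = ω v <;> simp [h, eq_comm]⟩ e

/-- The number of edges `|E|` of the comparison graph. -/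
def edgeCount {V : Type*} [Fintype V] [DecidableEq V]
    (G : SimpleGraph V) [DecidableRel G.Adj] : ℕ :=
  G.edgeFinset.card

/-- The number of ordered 2-paths `c(G) = ∑_v d(v)·(d(v) − 1)`. -/
def twoPaths {V : Type*} [Fintype V]
    (G : SimpleGraph V) [DecidableRel G.Adj] : ℕ :=
  ∑ v, G.degree v * (G.degree v - 1)

lemma apply_update_of_dependsOn {ι β : Type*} {α : ι → Type*} [DecidableEq ι] {f : (∀ i, α i) → β}
    {s : Set ι} (hf : DependsOn f s) {i : ι} (hi : i ∉ s) (x : ∀ i, α i) (a : α i) :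
    f (Function.update x i a) = f x :=
  hf fun _ hj => Function.update_of_ne (ne_of_mem_of_not_mem hj hi) _ _

lemma prod_update_mul_apply {ι α M : Type*} [Fintype ι] [DecidableEq ι] [CommMonoid M] (P : α → M)
    (x : ι → α) (i : ι) (a : α) :
    (∏ j, P (Function.update x i a j)) * P (x i) = (∏ j, P (x j)) * P a := by
  simp only [Function.apply_update (fun _ => P), prod_update_of_mem (mem_univ i)]
  rw [← mul_prod_erase univ (fun j => P (x j)) (mem_univ i), sdiff_singleton_eq_erase,
    mul_right_comm, mul_comm (P a), mul_right_comm]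

section Expectation

variable {V : Type*} [Fintype V] [DecidableEq V] {n : ℕ} {P : Fin n → ℝ}

lemma ex_const (hP1 : ∑ i, P i = 1) (c : ℝ) : ex P (fun _ : V → Fin n => c) = c := by
  rw [ex, ← sum_mul, ← Fintype.piFinset_univ, ← prod_univ_sum]
  simp [hP1]

lemma ex_sum {ι : Type*} (s : Finset ι) (f : ι → (V → Fin n) → ℝ) :
    ex P (fun ω => ∑ a ∈ s, f a ω) = ∑ a ∈ s, ex P (f a) := by
  simp only [ex, mul_sum]
  exact sum_comm

/-- Swapping the coordinate `ω u` with a fresh sample `i` preserves the weight of `(ω, i)`. -/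
lemma ex_eq_ex_sum_update (hP1 : ∑ i, P i = 1) (u : V) (f : (V → Fin n) → ℝ) :
    ex P f = ex P (fun ω => ∑ i, P i * f (Function.update ω u i)) := by
  have swap : Function.Involutive
      (fun p : (V → Fin n) × Fin n => (Function.update p.1 u p.2, p.1 u)) := by
    rintro ⟨ω, i⟩
    simp
  calc ex P f
      = ∑ p : (V → Fin n) × Fin n, (∏ v, P (p.1 v)) * P p.2 * f p.1 := by
        simp only [Fintype.sum_prod_type, ex, ← sum_mul, ← mul_sum, hP1, mul_one]
    _ = ∑ p : (V → Fin n) × Fin n, (∏ v, P (p.1 v)) * P p.2 * f (Function.update p.1 u p.2) := by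
        rw [← Equiv.sum_comp swap.toPerm]
        simp only [Function.Involutive.coe_toPerm, prod_update_mul_apply]
    _ = ex P (fun ω => ∑ i, P i * f (Function.update ω u i)) := by
        simp only [Fintype.sum_prod_type, ex, mul_sum, mul_assoc]

lemma ex_apply (hP1 : ∑ i, P i = 1) (u : V) (g : Fin n → ℝ) :
    ex P (fun ω : V → Fin n => g (ω u)) = ∑ i, P i * g i := by
  rw [ex_eq_ex_sum_update hP1 u]
  simp only [Function.update_self, ex_const hP1]

lemma ex_mul_eq_ex_mul_ex (hP1 : ∑ i, P i = 1) {f g : (V → Fin n) → ℝ} {s : Finset V} {t : Set V}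
    (hf : DependsOn f s) (hg : DependsOn g t) (hst : Disjoint (s : Set V) t) :
    ex P (fun ω => f ω * g ω) = ex P f * ex P g := by
  induction s using Finset.induction_on generalizing f with
  | empty =>
    rw [coe_empty] at hf
    obtain ⟨c, rfl⟩ : ∃ c, f = fun _ => c := by
      rcases isEmpty_or_nonempty (V → Fin n) with _ | ⟨⟨ω₀⟩⟩
      · exact ⟨0, Subsingleton.elim _ _⟩
      · exact ⟨f ω₀, funext fun ω => hf.empty ω ω₀⟩
    rw [ex_const hP1]
    simp only [ex, mul_sum, mul_left_comm]
  | insert u s hu ih =>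
    rw [coe_insert, Set.disjoint_insert_left] at hst
    have hfs : DependsOn (fun ω => ∑ i, P i * f (Function.update ω u i)) s := by
      intro x y hxy
      refine sum_congr rfl fun i _ => congrArg (P i * ·) (hf.update u i ?_)
      simpa [hu] using hxy
    have hgu (ω i) : g (Function.update ω u i) = g ω := apply_update_of_dependsOn hg hst.1 ω i
    calc ex P (fun ω => f ω * g ω)
        = ex P (fun ω => (∑ i, P i * f (Function.update ω u i)) * g ω) := by
          rw [ex_eq_ex_sum_update hP1 u]
          simp only [hgu, sum_mul, mul_assoc]
      _ = ex P f * ex P g := by rw [ih hfs hst.2, ← ex_eq_ex_sum_update hP1]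

end Expectation

section Variance

variable {V : Type*} [Fintype V] [DecidableEq V] {n : ℕ} {P : Fin n → ℝ}

/-- Covariance of `f` and `g` under the product distribution. -/
noncomputable def cov (P : Fin n → ℝ) (f g : (V → Fin n) → ℝ) : ℝ :=
  ex P (fun ω => f ω * g ω) - ex P f * ex P g

lemma var_eq_cov_self (hP1 : ∑ i, P i = 1) (f : (V → Fin n) → ℝ) : var P f = cov P f f := by
  rw [var, cov]
  set m := ex P f with hm
  calc ex P (fun ω => (f ω - m) ^ 2)
      = ∑ ω : V → Fin n, ((∏ v, P (ω v)) * (f ω * f ω) - 2 * m * ((∏ v, P (ω v)) * f ω)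
          + (∏ v, P (ω v)) * m ^ 2) := sum_congr rfl fun ω _ => by ring
    _ = ex P (fun ω => f ω * f ω) - 2 * m * ex P f + ex P (fun _ : V → Fin n => m ^ 2) := by
        rw [sum_add_distrib, sum_sub_distrib, ← mul_sum]
        rfl
    _ = ex P (fun ω => f ω * f ω) - m * m := by
        rw [ex_const hP1, ← hm]
        ring

lemma var_sum (hP1 : ∑ i, P i = 1) {ι : Type*} (s : Finset ι) (f : ι → (V → Fin n) → ℝ) :
    var P (fun ω => ∑ a ∈ s, f a ω) = ∑ a ∈ s, ∑ b ∈ s, cov P (f a) (f b) := by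
  rw [var_eq_cov_self hP1]
  simp only [cov, sum_mul_sum, ex_sum, sum_sub_distrib]

lemma pr_lt_le_var_div_sq (hP0 : ∀ i, 0 ≤ P i) (f : (V → Fin n) → ℝ) {T : ℝ} (hT : T < ex P f) :
    pr P (fun ω => f ω < T) ≤ var P f / (ex P f - T) ^ 2 := by
  rw [le_div_iff₀ (pow_pos (sub_pos.2 hT) 2), var]
  set m := ex P f
  rw [pr, ex, sum_mul]
  refine sum_le_sum fun ω _ => ?_
  have hw : 0 ≤ ∏ v, P (ω v) := prod_nonneg fun v _ => hP0 _
  split_ifs with h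
  · have hdev : (m - T) ^ 2 ≤ (f ω - m) ^ 2 := by
      rw [sub_sq_comm (f ω)]
      gcongr
    gcongr
  · rw [zero_mul]
    positivity

end Variance

section CollisionIndicator

variable {V α : Type*} [DecidableEq α]

/-- Indicator of the event that the two endpoints of the pair `e` receive the same sample. The
image pair `e.map ω` lies on the diagonal of `Sym2 α` exactly in that case. -/
def collisionIndicator (e : Sym2 V) (ω : V → α) : ℝ :=
  if (e.map ω).IsDiag then 1 else 0

variable [DecidableEq V]

lemma dependsOn_collisionIndicator (e : Sym2 V) :
    DependsOn (collisionIndicator e : (V → α) → ℝ) e.toFinset := by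
  intro x y hxy
  have hmap : e.map x = e.map y := Sym2.map_congr fun v hv => hxy v (by simpa using hv)
  simp only [collisionIndicator, hmap]

variable [Fintype V] {n : ℕ} {P : Fin n → ℝ}

lemma collisions_eq_sum_collisionIndicator (G : SimpleGraph V) [DecidableRel G.Adj] :
    collisions (n := n) G = fun ω => ∑ e ∈ G.edgeFinset, collisionIndicator e ω := by
  funext ω
  refine sum_congr rfl fun e _ => ?_
  induction e with
  | h u v => simp [collisionIndicator]

lemma ex_collisionIndicator_mul (hP1 : ∑ i, P i = 1) {u v : V} (huv : u ≠ v)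
    {g : (V → Fin n) → ℝ} {s : Set V} (hg : DependsOn g s) (hv : v ∉ s) :
    ex P (fun ω => collisionIndicator s(u, v) ω * g ω) = ex P (fun ω => P (ω u) * g ω) := by
  rw [ex_eq_ex_sum_update hP1 v]
  simp [collisionIndicator, apply_update_of_dependsOn hg hv, huv]

lemma ex_collisionIndicator (hP1 : ∑ i, P i = 1) {e : Sym2 V} (he : ¬ e.IsDiag) :
    ex P (collisionIndicator e) = ∑ i, P i ^ 2 := by
  induction e with
  | h u v =>
    have h := ex_collisionIndicator_mul hP1 he (dependsOn_const 1) (Set.notMem_empty v)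
    simpa [ex_apply hP1 u P, ← pow_two] using h

lemma cov_collisionIndicator_self (hP1 : ∑ i, P i = 1) {e : Sym2 V} (he : ¬ e.IsDiag) :
    cov P (collisionIndicator e) (collisionIndicator e) =
      ∑ i, P i ^ 2 - (∑ i, P i ^ 2) ^ 2 := by
  have hidem (ω : V → Fin n) :
      collisionIndicator e ω * collisionIndicator e ω = collisionIndicator e ω := by
    simp [collisionIndicator]
  simp only [cov, hidem]
  rw [ex_collisionIndicator hP1 he, pow_two]

lemma cov_collisionIndicator_of_disjoint (hP1 : ∑ i, P i = 1) {e f : Sym2 V}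
    (hef : Disjoint e.toFinset f.toFinset) :
    cov P (collisionIndicator e) (collisionIndicator f) = 0 :=
  sub_eq_zero.2 <| ex_mul_eq_ex_mul_ex hP1 (dependsOn_collisionIndicator e)
    (dependsOn_collisionIndicator f) (disjoint_coe.2 hef)

lemma cov_collisionIndicator_of_path (hP1 : ∑ i, P i = 1) {u v w : V} (huv : u ≠ v) (huw : u ≠ w)
    (hvw : v ≠ w) :
    cov P (collisionIndicator s(u, v)) (collisionIndicator s(u, w)) =
      ∑ i, P i ^ 3 - (∑ i, P i ^ 2) ^ 2 := by
  have hdep : DependsOn (fun ω : V → Fin n => P (ω u)) {u} := fun x y h => by simp [h u rfl]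
  have hex : ex P (fun ω : V → Fin n => collisionIndicator s(u, v) ω * collisionIndicator s(u, w) ω)
      = ∑ i, P i ^ 3 :=
    calc _ = ex P (fun ω : V → Fin n => P (ω u) * collisionIndicator s(u, w) ω) :=
          ex_collisionIndicator_mul hP1 huv (dependsOn_collisionIndicator _)
            (by simp [huv.symm, hvw])
      _ = ex P (fun ω : V → Fin n => P (ω u) * P (ω u)) := by
          simp only [mul_comm (P _) (collisionIndicator _ _)]
          exact ex_collisionIndicator_mul hP1 huw hdep huw.symm
      _ = ∑ i, P i ^ 3 := by
          rw [ex_apply hP1 u fun i => P i * P i]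
          exact sum_congr rfl fun i _ => by ring
  rw [cov, hex, ex_collisionIndicator hP1 (Sym2.mk_isDiag_iff.not.2 huv),
    ex_collisionIndicator hP1 (Sym2.mk_isDiag_iff.not.2 huw), pow_two (∑ i, P i ^ 2)]

lemma cov_collisionIndicator_of_ne (hP1 : ∑ i, P i = 1) {e f : Sym2 V} (he : ¬ e.IsDiag)
    (hf : ¬ f.IsDiag) (hef : e ≠ f) :
    cov P (collisionIndicator e) (collisionIndicator f) =
      #{v | v ∈ e ∧ v ∈ f} * (∑ i, P i ^ 3 - (∑ i, P i ^ 2) ^ 2) := by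
  by_cases h : ∃ u, u ∈ e ∧ u ∈ f
  · obtain ⟨u, ⟨v, rfl⟩, ⟨w, rfl⟩⟩ := h
    rw [Sym2.mk_isDiag_iff] at he hf
    have hvw : v ≠ w := by
      rintro rfl
      exact hef rfl
    have hcommon : ({x | x ∈ s(u, v) ∧ x ∈ s(u, w)} : Finset V) = {u} := by
      ext x
      simp only [Sym2.mem_iff, mem_filter_univ, mem_singleton]
      grind
    rw [cov_collisionIndicator_of_path hP1 he hf hvw, hcommon, card_singleton, Nat.cast_one,
      one_mul]
  · have hdisj : Disjoint e.toFinset f.toFinset := by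
      simpa [disjoint_left] using h
    rw [cov_collisionIndicator_of_disjoint hP1 hdisj, filter_false_of_mem fun v _ hv => h ⟨v, hv⟩,
      card_empty, Nat.cast_zero, zero_mul]

end CollisionIndicator

section CollisionCount

variable {V : Type*} [Fintype V] [DecidableEq V] {n : ℕ} {P : Fin n → ℝ}
  (G : SimpleGraph V) [DecidableRel G.Adj]

/-- An ordered 2-path is an ordered pair of distinct edges at its middle vertex. -/
lemma sum_offDiag_card_common_eq_twoPaths :
    ∑ p ∈ G.edgeFinset.offDiag, #{v | v ∈ p.1 ∧ v ∈ p.2} = twoPaths G := by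
  have hfiber (v : V) : {p ∈ G.edgeFinset.offDiag | v ∈ p.1 ∧ v ∈ p.2} =
      (G.incidenceFinset v).offDiag := by
    ext p
    simp only [G.incidenceFinset_eq_filter, mem_filter, mem_offDiag]
    tauto
  calc ∑ p ∈ G.edgeFinset.offDiag, #{v | v ∈ p.1 ∧ v ∈ p.2}
      = ∑ v, #{p ∈ G.edgeFinset.offDiag | v ∈ p.1 ∧ v ∈ p.2} := by
        simp only [card_filter]
        exact sum_comm
    _ = twoPaths G := by
        simp only [hfiber, offDiag_card, G.card_incidenceFinset_eq_degree, twoPaths,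
          Nat.mul_sub_one]

lemma ex_collisions (hP1 : ∑ i, P i = 1) :
    ex P (collisions G) = edgeCount G * ∑ i, P i ^ 2 := by
  rw [collisions_eq_sum_collisionIndicator, ex_sum, edgeCount, ← nsmul_eq_mul]
  exact sum_eq_card_nsmul fun e he =>
    ex_collisionIndicator hP1 (G.not_isDiag_of_mem_edgeFinset he)

lemma var_collisions (hP1 : ∑ i, P i = 1) :
    var P (collisions G) = edgeCount G * (∑ i, P i ^ 2 - (∑ i, P i ^ 2) ^ 2) +
      twoPaths G * (∑ i, P i ^ 3 - (∑ i, P i ^ 2) ^ 2) := by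
  rw [collisions_eq_sum_collisionIndicator, var_sum hP1, ← sum_product', ← diag_union_offDiag,
    sum_union (disjoint_diag_offDiag _), sum_diag]
  congr 1
  · rw [edgeCount, ← nsmul_eq_mul]
    exact sum_eq_card_nsmul fun e he =>
      cov_collisionIndicator_self hP1 (G.not_isDiag_of_mem_edgeFinset he)
  · rw [← sum_offDiag_card_common_eq_twoPaths, Nat.cast_sum, sum_mul]
    refine sum_congr rfl fun p hp => ?_
    obtain ⟨he, hf, hef⟩ := mem_offDiag.1 hp
    exact cov_collisionIndicator_of_ne hP1 (G.not_isDiag_of_mem_edgeFinset he)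
      (G.not_isDiag_of_mem_edgeFinset hf) hef

lemma var_collisions_le (hP1 : ∑ i, P i = 1)
    (htype : (twoPaths G : ℝ) * (∑ i, P i ^ 3 - (∑ i, P i ^ 2) ^ 2) ≤
      edgeCount G * (∑ i, P i ^ 2 - (∑ i, P i ^ 2) ^ 2)) :
    var P (collisions G) ≤ 2 * (edgeCount G * ∑ i, P i ^ 2) := by
  have hsq : 0 ≤ (edgeCount G : ℝ) * (∑ i, P i ^ 2) ^ 2 := by positivity
  rw [var_collisions G hP1]
  linarith

end CollisionCount

section Gap

lemma sq_sum_abs_sub_inv_card_le {α : Type*} [Fintype α] {P : α → ℝ} (hP1 : ∑ i, P i = 1) :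
    (∑ i, |P i - 1 / (Fintype.card α : ℝ)|) ^ 2 ≤ Fintype.card α * ∑ i, P i ^ 2 - 1 := by
  have : Nonempty α := by
    by_contra! h
    simp at hP1
  set N : ℝ := (Fintype.card α : ℝ) with hN
  have hN0 : N ≠ 0 := by simp [hN]
  calc (∑ i, |P i - 1 / N|) ^ 2
      ≤ N * ∑ i, (P i - 1 / N) ^ 2 := by
        simpa [hN] using sq_sum_le_card_mul_sum_sq (s := univ) (f := fun i => |P i - 1 / N|)
    _ = N * ∑ i, (P i ^ 2 - 2 / N * P i + (1 / N) ^ 2) := by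
        congr! 2 with i
        ring
    _ = N * ∑ i, P i ^ 2 - 1 := by
        rw [sum_add_distrib, sum_sub_distrib, ← mul_sum, hP1, sum_const, card_univ, nsmul_eq_mul,
          ← hN]
        field_simp
        ring

variable {n m μ ε τ : ℝ}

lemma gap_le_mean_sub_threshold (hn : 0 < n) (hm : 0 ≤ m) (hτ0 : 0 ≤ τ) (hμ : ε ^ 2 ≤ n * μ - 1) :
    m * ((1 - τ) * (n * μ - 1)) / n ≤ m * μ - m * (1 + τ * ε ^ 2) / n := by
  have hτμ : τ * ε ^ 2 ≤ τ * (n * μ - 1) := by gcongr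
  calc m * ((1 - τ) * (n * μ - 1)) / n
      ≤ m * (n * μ - (1 + τ * ε ^ 2)) / n := by
        gcongr
        linarith
    _ = m * μ - m * (1 + τ * ε ^ 2) / n := by
        field_simp

lemma eight_mul_mean_le_gap_sq (hn : 0 < n) (hε0 : 0 < ε) (hε1 : ε ≤ 1) (hτ1 : τ < 1)
    (hE : 16 * n / ((1 - τ) ^ 2 * ε ^ 4) ≤ m) (hμ : ε ^ 2 ≤ n * μ - 1) :
    8 * (m * μ) ≤ (m * ((1 - τ) * (n * μ - 1)) / n) ^ 2 := by
  have : 0 < 1 - τ := sub_pos.2 hτ1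
  have hm : 0 ≤ m := le_trans (by positivity) hE
  have hδ : 0 ≤ n * μ - 1 := (sq_nonneg ε).trans hμ
  have hE' : 16 * n ≤ m * ((1 - τ) ^ 2 * ε ^ 4) := (div_le_iff₀ (by positivity)).1 hE
  have hε4 : n * μ * ε ^ 4 ≤ 2 * (n * μ - 1) ^ 2 := by
    have hsq : ε ^ 4 ≤ (n * μ - 1) ^ 2 := by
      rw [show ε ^ 4 = (ε ^ 2) ^ 2 by ring]
      gcongr
    have hle : ε ^ 4 ≤ n * μ - 1 := (pow_le_pow_of_le_one hε0.le hε1 (by norm_num)).trans hμ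
    linarith [mul_le_mul_of_nonneg_left hle hδ]
  rw [div_pow, le_div_iff₀ (by positivity)]
  calc 8 * (m * μ) * n ^ 2 = m / 2 * (16 * n * (n * μ)) := by ring
    _ ≤ m / 2 * (m * ((1 - τ) ^ 2 * ε ^ 4) * (n * μ)) := by
        gcongr
        linarith
    _ = m / 2 * (m * (1 - τ) ^ 2 * (n * μ * ε ^ 4)) := by ring
    _ ≤ m / 2 * (m * (1 - τ) ^ 2 * (2 * (n * μ - 1) ^ 2)) := by gcongr
    _ = (m * ((1 - τ) * (n * μ - 1))) ^ 2 := by ring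

end Gap

/-- Type-1 far distributions: if `|E| ≥ 16n/((1−τ)²ε⁴)`, `P` is ε-far from uniform and
`|E|·(μ − μ²) ≥ c(G)·(γ − μ²)`, then `Pr[Z < T] ≤ 1/4` for `T = |E|·(1+τε²)/n`. -/
theorem far_type_one_case {V : Type*} [Fintype V] [DecidableEq V] (n : ℕ) (hn : 1 ≤ n)
    (ε τ : ℝ) (hε0 : 0 < ε) (hε1 : ε ≤ 1) (hτ0 : 0 ≤ τ) (hτ1 : τ < 1)
    (G : SimpleGraph V) [DecidableRel G.Adj]
    (hE : 16 * (n : ℝ) / ((1 - τ) ^ 2 * ε ^ 4) ≤ (edgeCount G : ℝ))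
    (P : Fin n → ℝ) (hP0 : ∀ i, 0 ≤ P i) (hP1 : (∑ i, P i) = 1)
    (hfar : ε ≤ ∑ i, |P i - 1 / (n : ℝ)|)
    (htype : (twoPaths G : ℝ) * ((∑ i, (P i) ^ 3) - (∑ i, (P i) ^ 2) ^ 2)
        ≤ (edgeCount G : ℝ) * ((∑ i, (P i) ^ 2) - (∑ i, (P i) ^ 2) ^ 2))
    (T : ℝ) (hT : T = (edgeCount G : ℝ) * (1 + τ * ε ^ 2) / n) :
    pr P (fun ω : V → Fin n => collisions G ω < T) ≤ 1 / 4 := by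
  have hn0 : (0 : ℝ) < n := by exact_mod_cast hn
  have : 0 < 1 - τ := sub_pos.2 hτ1
  have hm0 : (0 : ℝ) < edgeCount G := lt_of_lt_of_le (by positivity) hE
  have hμ : ε ^ 2 ≤ n * ∑ i, P i ^ 2 - 1 :=
    calc ε ^ 2 ≤ (∑ i, |P i - 1 / (n : ℝ)|) ^ 2 := by gcongr
      _ ≤ n * ∑ i, P i ^ 2 - 1 := by simpa using sq_sum_abs_sub_inv_card_le hP1
  set gap : ℝ := edgeCount G * ((1 - τ) * (n * ∑ i, P i ^ 2 - 1)) / n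
  have hgap0 : 0 < gap := by
    have hδ0 : 0 < n * ∑ i, P i ^ 2 - 1 := (pow_pos hε0 2).trans_le hμ
    positivity
  have hgap : gap ≤ ex P (collisions G) - T := by
    rw [ex_collisions G hP1, hT]
    exact gap_le_mean_sub_threshold hn0 hm0.le hτ0 hμ
  calc pr P (fun ω : V → Fin n => collisions G ω < T)
      ≤ var P (collisions G) / (ex P (collisions G) - T) ^ 2 :=
        pr_lt_le_var_div_sq hP0 _ (sub_pos.1 (hgap0.trans_le hgap))
    _ ≤ 2 * (edgeCount G * ∑ i, P i ^ 2) / gap ^ 2 := by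
        gcongr
        exact var_collisions_le G hP1 htype
    _ ≤ 1 / 4 := by
        rw [div_le_iff₀ (by positivity)]
        linarith [eight_mul_mean_le_gap_sq hn0 hε0 hε1 hτ1 hE hμ]
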